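/- If the TSL formula φ associated with the PCP instance is realizable, then the PCP instance has a solution, i.e., there exists a finite index sequence i_0,…,i_k with w_{i_0} w_{i_1} ⋯ w_{i_k} = v_{i_0} v_{i_1} ⋯ v_{i_k}. -/

import Mathlib

set_option autoImplicit false

namespace TSLspec

/-- Function terms over input-signal names `I`, output-signal names `O` and
function names `F` with arities `arF`.  The constructor `init s` is the fresh
`0`-ary constant term `init_s` providing the initial value of the output
signal `s`. -/
inductive FTerm (I O F : Type) (arF : F → ℕ) : Type where
  | inp  : I → FTerm I O F arF
  | out  : O → FTerm I O F arF
  | init : O → FTerm I O F arF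
  | app  : (f : F) → (Fin (arF f) → FTerm I O F arF) → FTerm I O F arF

variable {I O F P : Type} {arF : F → ℕ} {arP : P → ℕ}

/-- Predicate terms `p(τ₀, …, τ_{n-1})`. -/
structure PTerm (I O F P : Type) (arF : F → ℕ) (arP : P → ℕ) : Type where
  pred : P
  args : Fin (arP pred) → FTerm I O F arF

/-- A computation step is a map from output names to function terms; a
computation is an infinite sequence of computation steps. -/
abbrev Computation (I O F : Type) (arF : F → ℕ) : Type :=
  ℕ → O → FTerm I O F arF

/-- Substitute each output name `s` by `c s`. -/
def substOut (c : O → FTerm I O F arF) : FTerm I O F arF → FTerm I O F arF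
  | .inp i => .inp i
  | .out s => c s
  | .init s => .init s
  | .app f a => .app f (fun k => substOut c (a k))

/-- Substitute each output name `s` by the constant `init_s`. -/
def substInit : FTerm I O F arF → FTerm I O F arF
  | .inp i => .inp i
  | .out s => .init s
  | .init s => .init s
  | .app f a => .app f (fun k => substInit (a k))

/-- The evaluation function `η`: `η(ς,t,s) = s` for input names `s`;
`η(ς,0,s) = init_s` for output names `s`; `η(ς,t,s) = η(ς,t-1,ς(t-1)(s))` for
output names `s` and `t > 0`; and `η` commutes with applications. -/
def eta (ς : Computation I O F arF) : ℕ → FTerm I O F arF → FTerm I O F arF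
  | 0, τ => substInit τ
  | t + 1, τ => eta ς t (substOut (ς t) τ)

/-- `η` applied to a predicate term (argumentwise). -/
def etaP (ς : Computation I O F arF) (t : ℕ)
    (pt : PTerm I O F P arF arP) : PTerm I O F P arF arP :=
  ⟨pt.pred, fun k => eta ς t (pt.args k)⟩

/-- An assignment `⟨·⟩`: values for input names, an `n`-ary function on
values for each `n`-ary function name, an `n`-ary Boolean predicate on values
for each `n`-ary predicate name, and an initial value `⟨init_s⟩` for each
output name `s`. -/
structure Assignment (V I O F P : Type) (arF : F → ℕ) (arP : P → ℕ) :
    Type where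
  inpVal  : I → V
  fnVal   : (f : F) → (Fin (arF f) → V) → V
  prVal   : (p : P) → (Fin (arP p) → V) → Bool
  initVal : O → V

variable {V : Type}

/-- Evaluation of a function term under an assignment, in an environment
`env` interpreting the output names.  For terms containing no output names
the result is independent of `env`. -/
def evalF (A : Assignment V I O F P arF arP) (env : O → V) :
    FTerm I O F arF → V
  | .inp i => A.inpVal i
  | .out s => env s
  | .init s => A.initVal s
  | .app f a => A.fnVal f (fun k => evalF A env (a k))

/-- Evaluation of a predicate term. -/
def evalP (A : Assignment V I O F P arF arP) (env : O → V)
    (pt : PTerm I O F P arF arP) : Bool :=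
  A.prVal pt.pred (fun k => evalF A env (pt.args k))

/-- TSL formulas. -/
inductive Formula (I O F P : Type) (arF : F → ℕ) (arP : P → ℕ) : Type where
  | predT  : PTerm I O F P arF arP → Formula I O F P arF arP
  | updT   : O → FTerm I O F arF → Formula I O F P arF arP
  | notT   : Formula I O F P arF arP → Formula I O F P arF arP
  | andT   : Formula I O F P arF arP → Formula I O F P arF arP →
             Formula I O F P arF arP
  | nextT  : Formula I O F P arF arP → Formula I O F P arF arP
  | untilT : Formula I O F P arF arP → Formula I O F P arF arP →
             Formula I O F P arF arP

/-- TSL satisfaction `ς,t ⊨ φ` (under the assignment `A`).  A predicate term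
is satisfied iff its `η`-unfolding evaluates to `true` (the unfolding
contains no output names, so the value is independent of the environment and
we quantify over all environments); an update term `[s ↜ τ]` is satisfied
iff `ς(t)(s) = τ` syntactically. -/
def Sat (A : Assignment V I O F P arF arP) (ς : Computation I O F arF) :
    Formula I O F P arF arP → ℕ → Prop
  | .predT pt, t => ∀ env : O → V, evalP A env (etaP ς t pt) = true
  | .updT s τ, t => ς t s = τ
  | .notT ψ, t => ¬ Sat A ς ψ t
  | .andT ψ θ, t => Sat A ς ψ t ∧ Sat A ς θ t
  | .nextT ψ, t => Sat A ς ψ (t + 1)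
  | .untilT θ ψ, t =>
      ∃ u, t ≤ u ∧ Sat A ς ψ u ∧ ∀ t', t ≤ t' → t' < u → Sat A ς θ t'

/-- A TSL formula is realizable iff some computation satisfies it under every
assignment (over every set of values). -/
def Realizable (φ : Formula I O F P arF arP) : Prop :=
  ∃ ς : Computation I O F arF,
    ∀ (V : Type) (A : Assignment V I O F P arF arP), Sat A ς φ 0

/- Derived TSL operators. -/

/-- A tautology (built from the formula `θ`). -/
def tslTrue (θ : Formula I O F P arF arP) : Formula I O F P arF arP :=
  .notT (.andT θ (.notT θ))

def tslFalse (θ : Formula I O F P arF arP) : Formula I O F P arF arP :=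
  .notT (tslTrue θ)

def tslOr (a b : Formula I O F P arF arP) : Formula I O F P arF arP :=
  .notT (.andT (.notT a) (.notT b))

def tslImp (a b : Formula I O F P arF arP) : Formula I O F P arF arP :=
  .notT (.andT a (.notT b))

def tslIff (a b : Formula I O F P arF arP) : Formula I O F P arF arP :=
  .andT (tslImp a b) (tslImp b a)

/-- Finally: `F θ = true 𝒰 θ`. -/
def tslF (base θ : Formula I O F P arF arP) : Formula I O F P arF arP :=
  .untilT (tslTrue base) θ

/-- Always: `G θ = ¬ F ¬ θ`. -/
def tslG (base θ : Formula I O F P arF arP) : Formula I O F P arF arP :=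
  .notT (tslF base (.notT θ))

def bigAndT (base : Formula I O F P arF arP)
    (l : List (Formula I O F P arF arP)) : Formula I O F P arF arP :=
  l.foldr .andT (tslTrue base)

def bigOrT (base : Formula I O F P arF arP)
    (l : List (Formula I O F P arF arP)) : Formula I O F P arF arP :=
  l.foldr tslOr (tslFalse base)

end TSLspec
namespace TSLspec

/-- The two output names `A` and `B`. -/
inductive ABName : Type where
  | A : ABName
  | B : ABName
deriving DecidableEq

/-- Function names for the PCP reduction: a unary function name for every
letter of the alphabet `Sig`, and a `0`-ary function name `X`. -/
abbrev PCPFn (Sig : Type) : Type := Sig ⊕ Unit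

/-- Arities: letters are unary, `X` is `0`-ary. -/
def pcpArF (Sig : Type) : PCPFn Sig → ℕ
  | .inl _ => 1
  | .inr _ => 0

/-- Arity of the single predicate name `p`: unary. -/
def pcpArP : Unit → ℕ := fun _ => 1

/-- Function terms of the PCP reduction: no input names, output names `A`
and `B`. -/
abbrev PCPTerm (Sig : Type) : Type :=
  FTerm Empty ABName (PCPFn Sig) (pcpArF Sig)

/-- `μ(x₀x₁⋯x_m, τ) = x₀(x₁(⋯ x_m(τ) ⋯))`. -/
def muPCP {Sig : Type} : List Sig → PCPTerm Sig → PCPTerm Sig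
  | [], τ => τ
  | x :: xs, τ => .app (Sum.inl x) (fun _ => muPCP xs τ)

/-- The constant term `X()`. -/
def Xpcp (Sig : Type) : PCPTerm Sig := .app (Sum.inr ()) (fun k => k.elim0)

/-- The predicate term `p(A)`. -/
def pA (Sig : Type) : PTerm Empty ABName (PCPFn Sig) Unit (pcpArF Sig) pcpArP :=
  ⟨(), fun _ => .out ABName.A⟩

/-- The predicate term `p(B)`. -/
def pB (Sig : Type) : PTerm Empty ABName (PCPFn Sig) Unit (pcpArF Sig) pcpArP :=
  ⟨(), fun _ => .out ABName.B⟩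

/-- The TSL formula associated with the PCP instance `w, v`:
`([A ↜ X()] ∧ [B ↜ X()]) ∧ ◯ G (⋁_j ([A ↜ μ(w_j, A)] ∧ [B ↜ μ(v_j, B)]))
∧ ◯◯ F (p(A) ↔ p(B))`. -/
def pcpFormula {Sig : Type} {n : ℕ} (w v : Fin (n + 1) → List Sig) :
    Formula Empty ABName (PCPFn Sig) Unit (pcpArF Sig) pcpArP :=
  let updA : Formula Empty ABName (PCPFn Sig) Unit (pcpArF Sig) pcpArP :=
    .updT ABName.A (Xpcp Sig)
  let updB : Formula Empty ABName (PCPFn Sig) Unit (pcpArF Sig) pcpArP :=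
    .updT ABName.B (Xpcp Sig)
  let choices := (List.finRange (n + 1)).map (fun j =>
    Formula.andT (.updT ABName.A (muPCP (w j) (.out ABName.A)))
                 (.updT ABName.B (muPCP (v j) (.out ABName.B))))
  .andT (.andT updA updB)
    (.andT (.nextT (tslG updA (bigOrT updA choices)))
           (.nextT (.nextT
             (tslF updA (tslIff (.predT (pA Sig)) (.predT (pB Sig)))))))

end TSLspec
namespace TSLspec

theorem two_color {α : Type} (len : α → ℕ) (W V : ℕ → α)
    (hW : StrictMono fun m => len (W m)) (hV : StrictMono fun m => len (V m))
    (hne : ∀ m, W m ≠ V m) : ∃ p : α → Bool, ∀ m, p (W m) ≠ p (V m) := by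
  classical
  have Winj : ∀ a b, W a = W b → a = b := fun a b h =>
    hW.injective (by simp only [h])
  have Vinj : ∀ a b, V a = V b → a = b := fun a b h =>
    hV.injective (by simp only [h])
  obtain ⟨a, ha⟩ : ∃ a : ℕ → Bool, ∀ u, a u =
      if h : ∃ x, x < u ∧ V x = W u then !(a h.choose)
      else if h : ∃ x, x < u ∧ V u = W x then !(a h.choose) else false := by
    let step : (u : ℕ) → ((y : ℕ) → y < u → Bool) → Bool := fun u rec =>
      if h : ∃ x, x < u ∧ V x = W u then !(rec h.choose h.choose_spec.1)
      else if h : ∃ x, x < u ∧ V u = W x then !(rec h.choose h.choose_spec.1) else false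
    refine ⟨fun u => (Nat.lt_wfRel.wf).fix (C := fun _ => Bool) step u, fun u => ?_⟩
    exact (Nat.lt_wfRel.wf).fix_eq (C := fun _ => Bool) step u
  have key : ∀ x y, V x = W y → a y = !(a x) := by
    intro x y hxy
    rcases lt_trichotomy x y with h | h | h
    · have hex : ∃ z, z < y ∧ V z = W y := ⟨x, h, hxy⟩
      have hz : hex.choose = x := Vinj _ _ (hex.choose_spec.2.trans hxy.symm)
      rw [ha y, dif_pos hex, hz]
    · subst h; exact absurd hxy.symm (hne x)
    · have hno : ¬ ∃ z, z < x ∧ V z = W x := by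
        rintro ⟨z, hz, e⟩
        have h1 := hV hz
        have h2 := hW h
        simp only [e, hxy] at h1 h2
        omega
      have hex : ∃ z, z < x ∧ V x = W z := ⟨y, h, hxy⟩
      have hz : hex.choose = y := Winj _ _ (hex.choose_spec.2.symm.trans hxy)
      rw [ha x, dif_neg hno, dif_pos hex, hz, Bool.not_not]
  refine ⟨fun l => if h : ∃ u, W u = l then a h.choose
    else if h : ∃ u, V u = l then !(a h.choose) else false, fun m => ?_⟩
  have h1 : ∃ u, W u = W m := ⟨m, rfl⟩
  have e1 : h1.choose = m := Winj _ _ h1.choose_spec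
  have h3 : ∃ u, V u = V m := ⟨m, rfl⟩
  have e3 : h3.choose = m := Vinj _ _ h3.choose_spec
  simp only
  rw [dif_pos h1, e1]
  by_cases h2 : ∃ u, W u = V m
  · rw [dif_pos h2, key m _ h2.choose_spec.symm]; simp
  · rw [dif_neg h2, dif_pos h3, e3]; simp

theorem eta_app {I O F : Type} {arF : F → ℕ} (ς : Computation I O F arF) (t : ℕ) :
    ∀ (f : F) (a : Fin (arF f) → FTerm I O F arF),
      eta ς t (.app f a) = .app f (fun k => eta ς t (a k)) := by
  induction t with
  | zero => intro f a; rfl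
  | succ t ih => intro f a; simp only [eta, substOut, ih]

/-- The term assignment with predicate `p`. -/
def listAsg (Sig : Type) (p : List Sig → Bool) :
    Assignment (List Sig) Empty ABName (PCPFn Sig) Unit (pcpArF Sig) pcpArP where
  inpVal := fun e => e.elim
  fnVal := fun f => match f with
    | .inl x => fun a => x :: a (0 : Fin 1)
    | .inr _ => fun _ => []
  prVal := fun _ a => p (a (0 : Fin 1))
  initVal := fun _ => []

theorem evalF_mu {Sig : Type} (p : List Sig → Bool) (env : ABName → List Sig)
    (ς : Computation Empty ABName (PCPFn Sig) (pcpArF Sig)) (t : ℕ)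
    (l : List Sig) (τ : PCPTerm Sig) :
    evalF (listAsg Sig p) env (eta ς t (muPCP l τ)) =
      l ++ evalF (listAsg Sig p) env (eta ς t τ) := by
  induction l with
  | nil => rfl
  | cons x xs ih =>
    simp only [muPCP, eta_app, evalF, List.cons_append, ← ih]
    rfl

theorem sat_bigOr {I O F P V : Type} {arF : F → ℕ} {arP : P → ℕ}
    (A : Assignment V I O F P arF arP) (ς : Computation I O F arF)
    (base : Formula I O F P arF arP) (t : ℕ) (l : List (Formula I O F P arF arP))
    (h : Sat A ς (bigOrT base l) t) : ∃ ψ ∈ l, Sat A ς ψ t := by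
  induction l with
  | nil => simp [bigOrT, tslFalse, tslTrue, Sat] at h
  | cons x xs ih =>
    by_cases hx : Sat A ς x t
    · exact ⟨x, by simp, hx⟩
    · have : Sat A ς (bigOrT base xs) t := by
        by_contra hn
        exact h ⟨hx, hn⟩
      obtain ⟨ψ, hm, hs⟩ := ih this
      exact ⟨ψ, by simp [hm], hs⟩

/-- Accumulated word. -/
def accW {Sig : Type} {n : ℕ} (w : Fin (n + 1) → List Sig) (j : ℕ → Fin (n + 1)) :
    ℕ → List Sig
  | 0 => []
  | m + 1 => w (j m) ++ accW w j m

theorem accW_flatten {Sig : Type} {n : ℕ} (j : ℕ → Fin (n + 1)) (m : ℕ) :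
    ∃ i : Fin m → Fin (n + 1), ∀ w : Fin (n + 1) → List Sig,
      accW w j m = (List.ofFn fun k => w (i k)).flatten := by
  induction m with
  | zero => exact ⟨fun k => k.elim0, fun w => by simp [accW]⟩
  | succ m ih =>
    obtain ⟨i, hi⟩ := ih
    refine ⟨Fin.cons (j m) i, fun w => ?_⟩
    simp [accW, List.ofFn_succ, hi]

theorem accW_mono {Sig : Type} {n : ℕ} (w : Fin (n + 1) → List Sig) (j : ℕ → Fin (n + 1))
    (hw : ∀ j, w j ≠ []) : StrictMono fun m => (accW w j (m + 1)).length := by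
  refine strictMono_nat_of_lt_succ fun m => ?_
  have := List.length_pos_iff.2 (hw (j (m + 1)))
  simp only [accW, List.length_append]
  omega

theorem evalF_out {Sig : Type} {n : ℕ} (p : List Sig → Bool) (env : ABName → List Sig)
    (ς : Computation Empty ABName (PCPFn Sig) (pcpArF Sig)) (s : ABName)
    (w : Fin (n + 1) → List Sig) (j : ℕ → Fin (n + 1))
    (h0 : ς 0 s = Xpcp Sig) (h : ∀ m, ς (m + 1) s = muPCP (w (j m)) (.out s)) (m : ℕ) :
    evalF (listAsg Sig p) env (eta ς (m + 1) (.out s)) = accW w j m := by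
  induction m with
  | zero =>
    simp only [eta, substOut, h0, Xpcp, substInit, evalF, accW]
    rfl
  | succ m ih =>
    rw [eta, substOut, h m, evalF_mu, ih, accW]

/-- If the TSL formula associated with the PCP instance
`w, v` (over a finite alphabet, with nonempty words) is realizable, then the
PCP instance has a solution: there is a finite index sequence `i₀,…,i_k` with
`w_{i₀}w_{i₁}⋯w_{i_k} = v_{i₀}v_{i₁}⋯v_{i_k}`. -/
theorem pcp_of_realizable {Sig : Type} [Finite Sig] {n : ℕ}
    (w v : Fin (n + 1) → List Sig)
    (hw : ∀ j, w j ≠ []) (hv : ∀ j, v j ≠ [])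
    (hreal : Realizable (pcpFormula w v)) :
    ∃ (k : ℕ) (i : Fin (k + 1) → Fin (n + 1)),
      (List.ofFn fun j => w (i j)).flatten =
      (List.ofFn fun j => v (i j)).flatten := by
  classical
  obtain ⟨ς, hς⟩ := hreal
  obtain ⟨⟨hA, hB⟩, hG, -⟩ := hς _ (listAsg Sig fun _ => false)
  have hj : ∀ m, ∃ j, ς (m + 1) ABName.A = muPCP (w j) (.out ABName.A) ∧
      ς (m + 1) ABName.B = muPCP (v j) (.out ABName.B) := by
    intro m
    have : Sat (listAsg Sig fun _ => false) ς (bigOrT (.updT ABName.A (Xpcp Sig))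
        ((List.finRange (n + 1)).map (fun j =>
          Formula.andT (.updT ABName.A (muPCP (w j) (.out ABName.A)))
            (.updT ABName.B (muPCP (v j) (.out ABName.B)))))) (m + 1) := by
      by_contra hn
      exact hG ⟨m + 1, by omega, hn, fun t' _ _ => fun hc => hc.2 hc.1⟩
    obtain ⟨ψ, hm, hs⟩ := sat_bigOr _ _ _ _ _ this
    obtain ⟨j, -, rfl⟩ := List.mem_map.1 hm
    exact ⟨j, hs⟩
  choose j hjA hjB using hj
  by_contra hcon
  have hne : ∀ m, accW w j (m + 1) ≠ accW v j (m + 1) := by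
    intro m he
    obtain ⟨i, hi⟩ := accW_flatten (Sig := Sig) j (m + 1)
    exact hcon ⟨m, i, by rw [← hi, ← hi, he]⟩
  obtain ⟨p, hp⟩ := two_color List.length _ _ (accW_mono w j hw) (accW_mono v j hv) hne
  obtain ⟨-, -, u, hu, ⟨h1, h2⟩, -⟩ := hς _ (listAsg Sig p)
  obtain ⟨m, rfl⟩ : ∃ m, u = m + 2 := ⟨u - 2, by omega⟩
  have eA : Sat (listAsg Sig p) ς (.predT (pA Sig)) (m + 2) ↔ p (accW w j (m + 1)) = true := by
    have : ∀ env, evalP (listAsg Sig p) env (etaP ς (m + 2) (pA Sig)) = p (accW w j (m + 1)) :=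
      fun env => congrArg p (evalF_out p env ς ABName.A w j hA hjA (m + 1))
    simp only [Sat, this, forall_const]
  have eB : Sat (listAsg Sig p) ς (.predT (pB Sig)) (m + 2) ↔ p (accW v j (m + 1)) = true := by
    have : ∀ env, evalP (listAsg Sig p) env (etaP ς (m + 2) (pB Sig)) = p (accW v j (m + 1)) :=
      fun env => congrArg p (evalF_out p env ς ABName.B v j hB hjB (m + 1))
    simp only [Sat, this, forall_const]
  simp only [tslImp, Sat.eq_3, Sat.eq_4, eA, eB] at h1 h2
  apply hp m
  revert h1 h2
  cases p (accW w j (m + 1)) <;> cases p (accW v j (m + 1)) <;> simp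

end TSLspec
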